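/- Let the compact set A and lower semicontinuous kernel K satisfy assumptions (A1)-(A4). Let {a_n}_{n≥1} be any sequence in A such that lim_{n→∞} (1/(n−1))·Σ_{i=1}^{n−1} K(a_n, a_i) = W_K and such that (1/(n−1))·Σ_{i=1}^{n−1} K(a_n, a_i) = P((a_1,…,a_{n−1})) for each n > 1 (e.g., a greedy energy sequence). Then the normalized counting measures (1/N)·Σ_{i=1}^{N} δ_{a_i} converge weakly to μ_eq as N → ∞. -/

import Mathlib

open MeasureTheory Filter Topology BoundedContinuousFunction NNReal ENNReal

noncomputable section

/-- The potential of a measure `μ` with respect to the kernel `K x y = f (nndist x y)`. -/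
def potential {t : ℕ} (f : ℝ≥0 → ℝ≥0∞) (μ : Measure (EuclideanSpace ℝ (Fin t)))
    (x : EuclideanSpace ℝ (Fin t)) : ℝ≥0∞ :=
  ∫⁻ y, f (nndist x y) ∂μ

/-- The energy `I[μ] = ∫∫ K(x,y) dμ(x) dμ(y)`. -/
def energy {t : ℕ} (f : ℝ≥0 → ℝ≥0∞) (μ : Measure (EuclideanSpace ℝ (Fin t))) : ℝ≥0∞ :=
  ∫⁻ x, potential f μ x ∂μ

/-- The normalized discrete potential `(1/N) ∑_{y ∈ ω} K(x,y)` of a configuration. -/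
def discretePotential {t : ℕ} (f : ℝ≥0 → ℝ≥0∞) {N : ℕ}
    (ω : Fin N → EuclideanSpace ℝ (Fin t)) (x : EuclideanSpace ℝ (Fin t)) : ℝ≥0∞ :=
  (N : ℝ≥0∞)⁻¹ * ∑ i, f (nndist x (ω i))

/-- The polarization `P(ω) = min_{x ∈ A} (1/N) ∑_{y ∈ ω} K(x,y)` of a configuration. -/
def polarization {t : ℕ} (f : ℝ≥0 → ℝ≥0∞) (A : Set (EuclideanSpace ℝ (Fin t))) {N : ℕ}
    (ω : Fin N → EuclideanSpace ℝ (Fin t)) : ℝ≥0∞ :=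
  ⨅ x ∈ A, discretePotential f ω x

/-- The optimal `N`-point polarization `𝒫(A,N)`. -/
def maxPolarization {t : ℕ} (f : ℝ≥0 → ℝ≥0∞) (A : Set (EuclideanSpace ℝ (Fin t)))
    (N : ℕ) : ℝ≥0∞ :=
  ⨆ (ω : Fin N → EuclideanSpace ℝ (Fin t)) (_ : ∀ i, ω i ∈ A), polarization f A ω

/-- The normalized counting measure of a configuration. -/
def countingMeasure {t : ℕ} {N : ℕ} (ω : Fin N → EuclideanSpace ℝ (Fin t)) :
    Measure (EuclideanSpace ℝ (Fin t)) :=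
  (N : ℝ≥0∞)⁻¹ • ∑ i, Measure.dirac (ω i)

/-- Weak convergence of a sequence of measures: integrals of every bounded continuous
function converge. -/
def WeaklyTendsto {t : ℕ} (ν : ℕ → Measure (EuclideanSpace ℝ (Fin t)))
    (μ : Measure (EuclideanSpace ℝ (Fin t))) : Prop :=
  ∀ g : EuclideanSpace ℝ (Fin t) →ᵇ ℝ,
    Tendsto (fun N => ∫ x, g x ∂(ν N)) atTop (𝓝 (∫ x, g x ∂μ))

lemma measurable_kernel {E : Type*} [PseudoMetricSpace E] [SecondCountableTopology E]
    [MeasurableSpace E] [OpensMeasurableSpace E] {f : ℝ≥0 → ℝ≥0∞} (hf : LowerSemicontinuous f) :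
    Measurable fun p : E × E => f (nndist p.1 p.2) :=
  hf.measurable.comp measurable_nndist

lemma lintegral_countingMeasure {t N : ℕ} (ω : Fin N → EuclideanSpace ℝ (Fin t))
    (g : EuclideanSpace ℝ (Fin t) → ℝ≥0∞) :
    ∫⁻ x, g x ∂(countingMeasure ω) = (N : ℝ≥0∞)⁻¹ * ∑ i, g (ω i) := by
  simp [countingMeasure, lintegral_finsetSum_measure]

lemma isProbabilityMeasure_countingMeasure {t N : ℕ} (hN : N ≠ 0)
    (ω : Fin N → EuclideanSpace ℝ (Fin t)) : IsProbabilityMeasure (countingMeasure ω) := by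
  constructor
  rw [← lintegral_one, lintegral_countingMeasure]
  simpa using ENNReal.inv_mul_cancel (by exact_mod_cast hN) (ENNReal.natCast_ne_top N)

lemma countingMeasure_compl_eq_zero {t N : ℕ} {A : Set (EuclideanSpace ℝ (Fin t))}
    (hA : MeasurableSet A) {ω : Fin N → EuclideanSpace ℝ (Fin t)} (hω : ∀ i, ω i ∈ A) :
    countingMeasure ω Aᶜ = 0 := by
  rw [← lintegral_indicator_one hA.compl, lintegral_countingMeasure]
  simp [hω]

/-- If the potential of a probability measure on `A` is constant on `A`, then that constant bounds
the polarization of every configuration in `A`. -/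
lemma polarization_le_of_potential_eq {t N : ℕ} {A : Set (EuclideanSpace ℝ (Fin t))}
    {f : ℝ≥0 → ℝ≥0∞} (hf : LowerSemicontinuous f) (hN : N ≠ 0)
    {μ : Measure (EuclideanSpace ℝ (Fin t))} [IsProbabilityMeasure μ] (hμA : μ Aᶜ = 0)
    {W : ℝ≥0∞} (hW : ∀ x ∈ A, potential f μ x = W)
    {ω : Fin N → EuclideanSpace ℝ (Fin t)} (hω : ∀ i, ω i ∈ A) :
    polarization f A ω ≤ W := by
  have hmeas (y : EuclideanSpace ℝ (Fin t)) : Measurable fun x => f (nndist x y) :=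
    hf.measurable.comp (measurable_id.nndist measurable_const)
  calc polarization f A ω = ∫⁻ _, polarization f A ω ∂μ := by simp
    _ ≤ ∫⁻ x, discretePotential f ω x ∂μ := by
      refine lintegral_mono_ae ?_
      filter_upwards [mem_ae_iff.2 hμA] with x hx using iInf₂_le x hx
    _ = (N : ℝ≥0∞)⁻¹ * ∑ i, potential f μ (ω i) := by
      simp only [discretePotential, potential]
      rw [lintegral_const_mul _ (Finset.measurable_fun_sum _ fun i _ => hmeas (ω i)),
        lintegral_finsetSum _ fun i _ => hmeas (ω i)]
      simp only [nndist_comm]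
    _ = W := by
      simp [hW _ (hω _), ← mul_assoc,
        ENNReal.inv_mul_cancel (Nat.cast_ne_zero.2 hN) (ENNReal.natCast_ne_top N)]

lemma sum_range_sum_range_le_of_symm {h : ℕ → ℕ → ℝ≥0∞} (hsymm : ∀ i j, h i j = h j i)
    {M W : ℝ≥0∞} (hdiag : ∀ i, h i i ≤ M)
    (hrow : ∀ n : ℕ, ∑ j ∈ Finset.range n, h n j ≤ n * W) (N : ℕ) :
    ∑ i ∈ Finset.range N, ∑ j ∈ Finset.range N, h i j ≤ N * M + N * N * W := by
  induction N with
  | zero => simp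
  | succ N ih =>
    have hcol : ∑ i ∈ Finset.range N, h i N = ∑ j ∈ Finset.range N, h N j :=
      Finset.sum_congr rfl fun i _ => hsymm i N
    simp only [Finset.sum_range_succ, Finset.sum_add_distrib, hcol]
    calc _ ≤ N * M + N * N * W + N * W + (N * W + M) := by
          gcongr
          exacts [hrow N, hrow N, hdiag N]
      _ ≤ N * M + N * N * W + N * W + (N * W + M) + W := le_self_add
      _ = ((N + 1 : ℕ) : ℝ≥0∞) * M + (N + 1 : ℕ) * (N + 1 : ℕ) * W := by
          push_cast
          ring

lemma lintegral_min_countingMeasure_le {t : ℕ} {f : ℝ≥0 → ℝ≥0∞} (hf : LowerSemicontinuous f)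
    {M : ℕ} {a : ℕ → EuclideanSpace ℝ (Fin t)} {W : ℝ≥0∞}
    (hrow : ∀ n : ℕ, ∑ j ∈ Finset.range n, f (nndist (a n) (a j)) ≤ n * W) {N : ℕ} (hN : N ≠ 0) :
    ∫⁻ p, min (f (nndist p.1 p.2)) M ∂((countingMeasure fun i : Fin N => a i).prod
      (countingMeasure fun i : Fin N => a i)) ≤ (N : ℝ≥0∞)⁻¹ * M + W := by
  have := isProbabilityMeasure_countingMeasure hN (fun i : Fin N => a i)
  have hN0 : (N : ℝ≥0∞) ≠ 0 := Nat.cast_ne_zero.2 hN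
  have hinv := ENNReal.inv_mul_cancel hN0 (ENNReal.natCast_ne_top N)
  rw [lintegral_prod _ ((measurable_kernel hf).min measurable_const).aemeasurable]
  simp only [lintegral_countingMeasure]
  rw [← Finset.mul_sum]
  simp only [fun x => Fin.sum_univ_eq_sum_range (fun j => min (f (nndist x (a j))) (M : ℝ≥0∞)) N]
  rw [Fin.sum_univ_eq_sum_range
    (fun i => ∑ j ∈ Finset.range N, min (f (nndist (a i) (a j))) (M : ℝ≥0∞)) N]
  calc _ ≤ (N : ℝ≥0∞)⁻¹ * ((N : ℝ≥0∞)⁻¹ * (N * M + N * N * W)) := by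
        gcongr
        refine sum_range_sum_range_le_of_symm (fun i j => by rw [nndist_comm])
          (fun i => min_le_right _ _) (fun n => le_trans ?_ (hrow n)) N
        exact Finset.sum_le_sum fun j _ => min_le_left _ _
    _ = (N : ℝ≥0∞)⁻¹ * (((N : ℝ≥0∞)⁻¹ * N) * M)
        + ((N : ℝ≥0∞)⁻¹ * N) * ((N : ℝ≥0∞)⁻¹ * N) * W := by ring
    _ = _ := by simp [hinv]

/-- Lower semicontinuity under weak convergence of the integral of a nonnegative lower
semicontinuous function. -/
lemma lintegral_le_liminf_lintegral_of_lowerSemicontinuous {Ω : Type*} [MeasurableSpace Ω]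
    [TopologicalSpace Ω] [OpensMeasurableSpace Ω] {μ : Measure Ω} {μs : ℕ → Measure Ω}
    {g : Ω → ℝ} (hg : LowerSemicontinuous g) (hg0 : 0 ≤ g)
    (hopen : ∀ G, IsOpen G → μ G ≤ atTop.liminf fun i => μs i G) :
    ∫⁻ x, ENNReal.ofReal (g x) ∂μ ≤ atTop.liminf fun i => ∫⁻ x, ENNReal.ofReal (g x) ∂(μs i) := by
  simp_rw [lintegral_eq_lintegral_meas_lt _ (Eventually.of_forall hg0) hg.measurable.aemeasurable]
  calc ∫⁻ s : ℝ in Set.Ioi 0, μ {x | s < g x}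
      ≤ ∫⁻ s : ℝ in Set.Ioi 0, atTop.liminf fun i => μs i {x | s < g x} :=
        lintegral_mono fun s => hopen _ (hg.isOpen_preimage s)
    _ ≤ _ := lintegral_liminf_le fun n => Antitone.measurable fun s r hsr =>
        measure_mono fun x hx => lt_of_le_of_lt hsr hx

lemma lintegral_min_le_liminf {t : ℕ} {f : ℝ≥0 → ℝ≥0∞} (hf : LowerSemicontinuous f) (M : ℕ)
    {ν : ℕ → ProbabilityMeasure (EuclideanSpace ℝ (Fin t))}
    {μ : ProbabilityMeasure (EuclideanSpace ℝ (Fin t))} (h : Tendsto ν atTop (𝓝 μ)) :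
    ∫⁻ p, min (f (nndist p.1 p.2)) M ∂((μ : Measure (EuclideanSpace ℝ (Fin t))).prod μ) ≤
      atTop.liminf fun n => ∫⁻ p, min (f (nndist p.1 p.2)) M
        ∂((ν n : Measure (EuclideanSpace ℝ (Fin t))).prod (ν n)) := by
  have hfin (p : EuclideanSpace ℝ (Fin t) × EuclideanSpace ℝ (Fin t)) :
      min (f (nndist p.1 p.2)) M ≠ ⊤ := ne_top_of_le_ne_top (ENNReal.natCast_ne_top M) inf_le_right
  have hlsc : LowerSemicontinuous fun p : EuclideanSpace ℝ (Fin t) × EuclideanSpace ℝ (Fin t) =>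
      (min (f (nndist p.1 p.2)) (M : ℝ≥0∞)).toReal := by
    have hmin : LowerSemicontinuous fun p : EuclideanSpace ℝ (Fin t) × EuclideanSpace ℝ (Fin t) =>
        min (f (nndist p.1 p.2)) (M : ℝ≥0∞) :=
      (hf.comp continuous_nndist).inf lowerSemicontinuous_const
    intro p s hs
    rcases lt_or_ge s 0 with hs0 | hs0
    · exact Eventually.of_forall fun q => hs0.trans_le ENNReal.toReal_nonneg
    · filter_upwards [hmin p _ ((ENNReal.ofReal_lt_iff_lt_toReal hs0 (hfin p)).2 hs)] with q hq
      exact (ENNReal.ofReal_lt_iff_lt_toReal hs0 (hfin q)).1 hq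
  have hprod : Tendsto (fun n => (ν n).prod (ν n)) atTop (𝓝 (μ.prod μ)) :=
    (ProbabilityMeasure.continuous_prod.tendsto (μ, μ)).comp (h.prodMk_nhds h)
  simpa only [ENNReal.ofReal_toReal (hfin _), ProbabilityMeasure.toMeasure_prod] using
    lintegral_le_liminf_lintegral_of_lowerSemicontinuous hlsc (fun _ => ENNReal.toReal_nonneg)
      fun G hG => ProbabilityMeasure.le_liminf_measure_open_of_tendsto hprod hG

lemma energy_le_of_forall_min_le {t : ℕ} {f : ℝ≥0 → ℝ≥0∞} (hf : LowerSemicontinuous f)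
    {μ : Measure (EuclideanSpace ℝ (Fin t))} [SFinite μ] {W : ℝ≥0∞}
    (h : ∀ M : ℕ, ∫⁻ p, min (f (nndist p.1 p.2)) M ∂(μ.prod μ) ≤ W) : energy f μ ≤ W := by
  have hsup (x : ℝ≥0∞) : ⨆ M : ℕ, min x (M : ℝ≥0∞) = x := by
    rw [← inf_iSup_eq, ENNReal.iSup_natCast, inf_top_eq]
  have hprod : energy f μ = ∫⁻ p, f (nndist p.1 p.2) ∂(μ.prod μ) :=
    (lintegral_prod _ (measurable_kernel hf).aemeasurable).symm
  calc energy f μ = ∫⁻ p, ⨆ M : ℕ, min (f (nndist p.1 p.2)) (M : ℝ≥0∞) ∂(μ.prod μ) := by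
        simp only [hsup, hprod]
    _ = ⨆ M : ℕ, ∫⁻ p, min (f (nndist p.1 p.2)) (M : ℝ≥0∞) ∂(μ.prod μ) :=
        lintegral_iSup (fun M => (measurable_kernel hf).min measurable_const)
          fun M M' hM p => min_le_min le_rfl (Nat.cast_le.2 hM)
    _ ≤ W := iSup_le h

theorem greedy_points_equidistribute
    {t : ℕ} (A : Set (EuclideanSpace ℝ (Fin t))) (hA : IsCompact A)
    (f : ℝ≥0 → ℝ≥0∞) (hf : LowerSemicontinuous f)
    (μeq : Measure (EuclideanSpace ℝ (Fin t))) (hμeq : IsProbabilityMeasure μeq)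
    (hμeqA : μeq Aᶜ = 0)
    (hA1 : ∃ μ : Measure (EuclideanSpace ℝ (Fin t)),
      IsProbabilityMeasure μ ∧ μ Aᶜ = 0 ∧ energy f μ < ⊤)
    (hA2min : ∀ ν : Measure (EuclideanSpace ℝ (Fin t)),
      IsProbabilityMeasure ν → ν Aᶜ = 0 → energy f μeq ≤ energy f ν)
    (hA2uniq : ∀ ν : Measure (EuclideanSpace ℝ (Fin t)),
      IsProbabilityMeasure ν → ν Aᶜ = 0 → energy f ν = energy f μeq → ν = μeq)
    (hA3 : ∀ x ∈ A, ∀ U : Set (EuclideanSpace ℝ (Fin t)), IsOpen U → x ∈ U → 0 < μeq U)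
    (W : ℝ≥0∞) (hW : 0 < W) (hA4 : ∀ x ∈ A, potential f μeq x = W)
    (a : ℕ → EuclideanSpace ℝ (Fin t)) (ha : ∀ n, a n ∈ A)
    (hgreedy : ∀ n : ℕ, 1 ≤ n →
      (n : ℝ≥0∞)⁻¹ * ∑ i : Fin n, f (nndist (a n) (a i)) =
        polarization f A (fun i : Fin n => a i))
    (hlim : Tendsto (fun n : ℕ => (n : ℝ≥0∞)⁻¹ * ∑ i : Fin n, f (nndist (a n) (a i)))
      atTop (𝓝 W)) :
    WeaklyTendsto (fun N => countingMeasure (fun i : Fin N => a (i : ℕ))) μeq := by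
  have hν (N : ℕ) : IsProbabilityMeasure
      (countingMeasure (fun i : Fin (N + 1) => a (i : ℕ))) :=
    isProbabilityMeasure_countingMeasure N.succ_ne_zero _
  let ν (N : ℕ) : ProbabilityMeasure (EuclideanSpace ℝ (Fin t)) :=
    ⟨countingMeasure (fun i : Fin (N + 1) => a (i : ℕ)), hν N⟩
  have hνA (N : ℕ) : (ν N : Measure (EuclideanSpace ℝ (Fin t))) Aᶜ = 0 :=
    countingMeasure_compl_eq_zero hA.measurableSet fun i => ha i
  have hS (n : ℕ) : ∑ i ∈ Finset.range n, f (nndist (a n) (a i)) ≤ n * W := by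
    rcases n.eq_zero_or_pos with rfl | hn
    · simp
    have hn0 : (n : ℝ≥0∞) ≠ 0 := by exact_mod_cast hn.ne'
    have h := (hgreedy n hn).trans_le
      (polarization_le_of_potential_eq hf hn.ne' hμeqA hA4 fun i => ha i)
    rw [Fin.sum_univ_eq_sum_range (fun i => f (nndist (a n) (a i)))] at h
    rwa [← ENNReal.inv_mul_le_iff hn0 (ENNReal.natCast_ne_top n)]
  have henergy : energy f μeq = W := by
    have : potential f μeq =ᵐ[μeq] fun _ => W := by
      filter_upwards [mem_ae_iff.2 hμeqA] with x hx using hA4 x hx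
    rw [energy, lintegral_congr_ae this]
    simp
  suffices h : Tendsto ν atTop (𝓝 ⟨μeq, hμeq⟩) by
    intro g
    rw [← tendsto_add_atTop_iff_nat 1]
    exact ProbabilityMeasure.tendsto_iff_forall_integral_tendsto.1 h g
  refine tendsto_of_subseq_tendsto fun ns hns => ?_
  have hcompact : IsCompact (closure (Set.range ν)) := by
    refine isCompact_closure_of_isTightMeasureSet ?_
    rw [isTightMeasureSet_iff_exists_isCompact_measure_compl_le]
    rintro ε -
    refine ⟨A, hA, ?_⟩
    rintro _ ⟨_, ⟨N, rfl⟩, rfl⟩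
    exact (hνA N).trans_le zero_le
  obtain ⟨μ, -, φ, hφ, hlimit⟩ := hcompact.tendsto_subseq
    fun n => subset_closure (Set.mem_range_self (ns n))
  refine ⟨φ, ?_⟩
  have hμA : (μ : Measure (EuclideanSpace ℝ (Fin t))) Aᶜ = 0 := by
    refine le_antisymm ((ProbabilityMeasure.le_liminf_measure_open_of_tendsto hlimit
      hA.isClosed.isOpen_compl).trans ?_) zero_le
    simp [hνA]
  have hμ : energy f (μ : Measure (EuclideanSpace ℝ (Fin t))) ≤ W := by
    refine energy_le_of_forall_min_le hf fun M => ?_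
    refine (lintegral_min_le_liminf hf M hlimit).trans ?_
    have hbound (n : ℕ) := lintegral_min_countingMeasure_le hf (M := M) hS (ns (φ n)).succ_ne_zero
    have htend : Tendsto (fun n => ((ns (φ n) + 1 : ℕ) : ℝ≥0∞)⁻¹ * M + W) atTop
        (𝓝 (0 * M + W)) := by
      refine (ENNReal.Tendsto.mul_const ?_ (Or.inr (ENNReal.natCast_ne_top M))).add_const W
      exact ENNReal.tendsto_inv_nat_nhds_zero.comp
        ((tendsto_add_atTop_nat 1).comp (hns.comp hφ.tendsto_atTop))
    calc _ ≤ liminf (fun n => ((ns (φ n) + 1 : ℕ) : ℝ≥0∞)⁻¹ * M + W) atTop :=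
          liminf_le_liminf (Eventually.of_forall hbound)
      _ = W := by rw [htend.liminf_eq]; simp
  have : μ = ⟨μeq, hμeq⟩ := Subtype.ext <| hA2uniq μ inferInstance hμA <|
    le_antisymm (hμ.trans_eq henergy.symm) (hA2min μ inferInstance hμA)
  exact this ▸ hlimit
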